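/- arXiv:2507.06225 — 5 statements merged into one kernel-verified Lean document; each statement's English description precedes it below -/
import Mathlib

section
/- Let M and N be matroids with collections S_M ⊆ 2^{E(M)} and S_N ⊆ 2^{E(N)} such that S_M covers M and S_N covers N. For each a ∈ E(M) fix b_a ∈ S•(M) with p_{b_a} = a. Then the assignment w_{ax} ↦ Σ_{t ∈ S•(N), p_t = x} u_{b_a t} induces a well-defined unital ℂ-algebra homomorphism φ : 𝔖(E(M), E(N)) → 𝔄•(M,N,S), and φ is independent of the choices of the b_a. -/
open scoped BigOperators TensorProduct

namespace MatroidGame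

/-- A "pre-matroid": a finite ground set together with a distinguished collection of
finsets (intended to be the bases). -/
structure PreMatroid (α : Type*) where
  E : Finset α
  bases : Finset (Finset α)

namespace PreMatroid

variable {α : Type*} [DecidableEq α]

/-- The paper's definition of a matroid: a nonempty collection of `r`-element subsets of the
ground set satisfying the basis exchange axiom. -/
def IsMatroid (M : PreMatroid α) : Prop :=
  M.bases.Nonempty ∧
    (∀ B ∈ M.bases, B ⊆ M.E) ∧
    (∀ B₁ ∈ M.bases, ∀ B₂ ∈ M.bases, B₁.card = B₂.card) ∧
    (∀ B₁ ∈ M.bases, ∀ B₂ ∈ M.bases, ∀ a ∈ B₁ \ B₂,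
      ∃ b ∈ B₂ \ B₁, insert b (B₁.erase a) ∈ M.bases)

/-- A set is independent if it is contained in a basis. -/
def Indep (M : PreMatroid α) (I : Finset α) : Prop :=
  ∃ B ∈ M.bases, I ⊆ B

instance (M : PreMatroid α) : DecidablePred M.Indep := fun I =>
  inferInstanceAs (Decidable (∃ B ∈ M.bases, I ⊆ B))

/-- The rank of a subset: the maximal size of an independent subset of it. -/
def rkSet (M : PreMatroid α) (X : Finset α) : ℕ :=
  (X.powerset.filter fun I => M.Indep I).sup Finset.card

/-- The rank of the matroid. -/
def rk (M : PreMatroid α) : ℕ := M.rkSet M.E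

/-- A circuit is a minimal dependent subset of the ground set. -/
def Circuit (M : PreMatroid α) (C : Finset α) : Prop :=
  C ⊆ M.E ∧ ¬M.Indep C ∧ ∀ D ⊂ C, M.Indep D

/-- A matroid is paving if every circuit has size at least the rank. -/
def Paving (M : PreMatroid α) : Prop := ∀ C, M.Circuit C → M.rk ≤ C.card

/-- The dual matroid: bases are complements of bases. -/
def dual (M : PreMatroid α) : PreMatroid α := ⟨M.E, M.bases.image fun B => M.E \ B⟩

/-- A matroid is sparse paving if both it and its dual are paving. -/
def SparsePaving (M : PreMatroid α) : Prop := M.Paving ∧ M.dual.Paving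

/-- The closure of a set. -/
def cl (M : PreMatroid α) (X : Finset α) : Finset α :=
  M.E.filter fun b => M.rkSet (insert b X) = M.rkSet X

/-- A flat is a closed subset. -/
def IsFlat (M : PreMatroid α) (F : Finset α) : Prop := F ⊆ M.E ∧ M.cl F = F

/-- A hyperplane is a flat of rank `rk M - 1`. -/
def IsHyperplane (M : PreMatroid α) (H : Finset α) : Prop :=
  M.IsFlat H ∧ M.rkSet H = M.rk - 1

/-- A cyclic hyperplane is a hyperplane which is a union of circuits. -/
def IsCyclicHyperplane (M : PreMatroid α) (H : Finset α) : Prop :=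
  M.IsHyperplane H ∧ ∀ x ∈ H, ∃ C, M.Circuit C ∧ C ⊆ H ∧ x ∈ C

/-- A loop is a ground set element contained in no basis. -/
def IsLoop (M : PreMatroid α) (a : α) : Prop := a ∈ M.E ∧ ∀ B ∈ M.bases, a ∉ B

/-- A coloop is a ground set element contained in every basis. -/
def IsColoop (M : PreMatroid α) (a : α) : Prop := a ∈ M.E ∧ ∀ B ∈ M.bases, a ∈ B

def Loopless (M : PreMatroid α) : Prop := ∀ a, ¬M.IsLoop a

/-- A matroid is simple if it has no loops and every rank-1 subset is a singleton. -/
def Simple (M : PreMatroid α) : Prop :=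
  M.Loopless ∧ ∀ X ⊆ M.E, M.rkSet X = 1 → X.card = 1

/-- The restriction `M | Y`: its independent sets are the independent sets of `M` contained
in `Y`, and its bases are the maximal such sets. -/
def restrict (M : PreMatroid α) (Y : Finset α) : PreMatroid α :=
  ⟨Y, Y.powerset.filter fun B =>
      M.Indep B ∧ ∀ I ∈ Y.powerset, M.Indep I → B ⊆ I → I = B⟩

/-- `M` is the free extension of `N` by the new element `e`. -/
def IsFreeExtension (M N : PreMatroid α) (e : α) : Prop :=
  e ∉ N.E ∧ M.E = insert e N.E ∧
    ∀ B : Finset α, B ∈ M.bases ↔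
      (B ∈ N.bases ∨ ∃ A : Finset α, N.Indep A ∧ A.card = N.rk - 1 ∧ B = insert e A)

/-- The uniform matroid of rank `k` on the ground set `E`. -/
def uniform {β : Type*} (E : Finset β) (k : ℕ) : PreMatroid β := ⟨E, E.powersetCard k⟩

/-- The direct sum of two matroids. -/
def directSum {β γ : Type*} [DecidableEq β] [DecidableEq γ] (M : PreMatroid β)
    (N : PreMatroid γ) : PreMatroid (β ⊕ γ) :=
  ⟨M.E.map ⟨Sum.inl, Sum.inl_injective⟩ ∪ N.E.map ⟨Sum.inr, Sum.inr_injective⟩,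
    (M.bases ×ˢ N.bases).image fun p =>
      p.1.map ⟨Sum.inl, Sum.inl_injective⟩ ∪ p.2.map ⟨Sum.inr, Sum.inr_injective⟩⟩

/-- `φ` realizes an isomorphism of matroids: it is a bijection of the ground sets such that a
subset of the ground set is a basis iff its image is a basis. -/
def IsIsoMap {β γ : Type*} [DecidableEq γ] (M : PreMatroid β) (N : PreMatroid γ)
    (φ : β → γ) : Prop :=
  Set.BijOn φ ↑M.E ↑N.E ∧ ∀ B ⊆ M.E, (B ∈ M.bases ↔ B.image φ ∈ N.bases)

/-- Two matroids are isomorphic. -/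
def Iso {β γ : Type*} [DecidableEq γ] (M : PreMatroid β) (N : PreMatroid γ) : Prop :=
  ∃ φ : β → γ, M.IsIsoMap N φ

end PreMatroid

/-- The pointed sets `S•`: pairs `(A, p)` with `A ∈ S` and `p ∈ A`. -/
abbrev PtSet {α : Type*} (S : Finset (Finset α)) : Type _ :=
  {v : Finset α × α // v.1 ∈ S ∧ v.2 ∈ v.1}

/-- The relation `rel` on pointed sets, valued in `{0,1,2,3}`. -/
def relNum {α : Type*} [DecidableEq α] (a b : Finset α × α) : ℕ :=
  if a.1 = b.1 then (if a.2 = b.2 then 0 else 2) else (if a.2 = b.2 then 1 else 3)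

/-- `S` covers the ground set `E` if every element of `E` lies in a member of `S`. -/
def Covers {α : Type*} (S : Finset (Finset α)) (E : Finset α) : Prop :=
  ∀ a ∈ E, ∃ A ∈ S, a ∈ A

noncomputable section

/-- The defining relations of the quantum isomorphism (magic unitary) algebra `𝔖(I,J)`. -/
inductive MagicRel (I J : Type*) [Fintype I] [Fintype J] :
    FreeAlgebra ℂ (I × J) → FreeAlgebra ℂ (I × J) → Prop
  | idem (a : I) (x : J) :
      MagicRel I J (FreeAlgebra.ι ℂ (a, x) * FreeAlgebra.ι ℂ (a, x)) (FreeAlgebra.ι ℂ (a, x))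
  | row (a : I) {x y : J} (h : x ≠ y) :
      MagicRel I J (FreeAlgebra.ι ℂ (a, x) * FreeAlgebra.ι ℂ (a, y)) 0
  | col {a b : I} (x : J) (h : a ≠ b) :
      MagicRel I J (FreeAlgebra.ι ℂ (a, x) * FreeAlgebra.ι ℂ (b, x)) 0
  | rowSum (a : I) : MagicRel I J (∑ x : J, FreeAlgebra.ι ℂ (a, x)) 1
  | colSum (x : J) : MagicRel I J (∑ a : I, FreeAlgebra.ι ℂ (a, x)) 1

/-- The quantum isomorphism algebra `𝔖(I,J)`. -/
abbrev MagicAlgebra (I J : Type*) [Fintype I] [Fintype J] := RingQuot (MagicRel I J)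

/-- The generator `u_{a x}` of `𝔖(I,J)`. -/
def magicGen (I J : Type*) [Fintype I] [Fintype J] (a : I) (x : J) : MagicAlgebra I J :=
  RingQuot.mkAlgHom ℂ (MagicRel I J) (FreeAlgebra.ι ℂ (a, x))

/-- The defining relations of the isomorphism algebra: magic unitary relations together with
`u_{a x} u_{b y} = 0` whenever `rel(a,b) ≠ rel(x,y)`. -/
inductive IsoRel (I J : Type*) [Fintype I] [Fintype J] (rI : I → I → ℕ) (rJ : J → J → ℕ) :
    FreeAlgebra ℂ (I × J) → FreeAlgebra ℂ (I × J) → Prop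
  | magic {u v : FreeAlgebra ℂ (I × J)} : MagicRel I J u v → IsoRel I J rI rJ u v
  | mismatch (a b : I) (x y : J) (h : rI a b ≠ rJ x y) :
      IsoRel I J rI rJ (FreeAlgebra.ι ℂ (a, x) * FreeAlgebra.ι ℂ (b, y)) 0

/-- The generic isomorphism algebra for two relation-valued structures. -/
abbrev IsoAlgebra (I J : Type*) [Fintype I] [Fintype J] (rI : I → I → ℕ)
    (rJ : J → J → ℕ) :=
  RingQuot (IsoRel I J rI rJ)

/-- The generator `u_{a x}` of the isomorphism algebra. -/
def isoGen (I J : Type*) [Fintype I] [Fintype J] (rI : I → I → ℕ) (rJ : J → J → ℕ)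
    (a : I) (x : J) : IsoAlgebra I J rI rJ :=
  RingQuot.mkAlgHom ℂ (IsoRel I J rI rJ) (FreeAlgebra.ι ℂ (a, x))

/-- `rel` as a function on pointed sets. -/
abbrev ptRel {α : Type*} [DecidableEq α] (S : Finset (Finset α)) : PtSet S → PtSet S → ℕ :=
  fun a b => relNum a.val b.val

/-- The isomorphism `∗`-algebra `𝔄•(M,N,S)` associated to the matroid isomorphism game,
presented by magic unitary relations on pointed sets plus the `rel` mismatch relations. -/
abbrev MatIsoAlgebra {α β : Type*} [Fintype α] [Fintype β] [DecidableEq α] [DecidableEq β]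
    (S_M : Finset (Finset α)) (S_N : Finset (Finset β)) :=
  IsoAlgebra (PtSet S_M) (PtSet S_N) (ptRel S_M) (ptRel S_N)

/-- The generator `u_{𝔞 𝔵}` of `𝔄•(M,N,S)`. -/
def matGen {α β : Type*} [Fintype α] [Fintype β] [DecidableEq α] [DecidableEq β]
    (S_M : Finset (Finset α)) (S_N : Finset (Finset β)) (a : PtSet S_M) (x : PtSet S_N) :
    MatIsoAlgebra S_M S_N :=
  isoGen (PtSet S_M) (PtSet S_N) (ptRel S_M) (ptRel S_N) a x

end


open PreMatroid

section helpers

variable {α β : Type*} [Fintype α] [Fintype β] [DecidableEq α] [DecidableEq β]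
  (S_M : Finset (Finset α)) (S_N : Finset (Finset β))

theorem matGen_mismatch (a b : PtSet S_M) (x y : PtSet S_N)
    (h : ¬ (a.val.2 = b.val.2 ↔ x.val.2 = y.val.2)) :
    matGen S_M S_N a x * matGen S_M S_N b y = 0 := by
  have hr : ptRel S_M a b ≠ ptRel S_N x y := by
    intro e
    apply h
    simp only [ptRel, relNum] at e
    split_ifs at e <;> simp_all
  have := RingQuot.mkAlgHom_rel ℂ (IsoRel.mismatch (rI := ptRel S_M) (rJ := ptRel S_N) a b x y hr)
  simpa [matGen, isoGen] using this

theorem matGen_rowSum (a : PtSet S_M) : ∑ x, matGen S_M S_N a x = 1 := by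
  have := RingQuot.mkAlgHom_rel ℂ (IsoRel.magic (rI := ptRel S_M) (rJ := ptRel S_N)
    (MagicRel.rowSum (J := PtSet S_N) a))
  simpa [matGen, isoGen] using this

theorem matGen_colSum (x : PtSet S_N) : ∑ a, matGen S_M S_N a x = 1 := by
  have := RingQuot.mkAlgHom_rel ℂ (IsoRel.magic (rI := ptRel S_M) (rJ := ptRel S_N)
    (MagicRel.colSum (I := PtSet S_M) x))
  simpa [matGen, isoGen] using this

/-- Row sums over the pointed sets with a given point. -/
noncomputable def rowW (b : PtSet S_M) (x : β) : MatIsoAlgebra S_M S_N :=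
  ∑ t ∈ Finset.univ.filter (fun t : PtSet S_N => t.val.2 = x), matGen S_M S_N b t

/-- Column sums over the pointed sets with a given point. -/
noncomputable def colV (a : α) (s : PtSet S_N) : MatIsoAlgebra S_M S_N :=
  ∑ c ∈ Finset.univ.filter (fun c : PtSet S_M => c.val.2 = a), matGen S_M S_N c s

theorem rowW_eq_colV (b : PtSet S_M) (s : PtSet S_N) :
    rowW S_M S_N b s.val.2 = colV S_M S_N b.val.2 s := by
  have h1 : rowW S_M S_N b s.val.2 = rowW S_M S_N b s.val.2 * colV S_M S_N b.val.2 s := by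
    conv_lhs => rw [← mul_one (rowW S_M S_N b s.val.2), ← matGen_colSum S_M S_N s]
    rw [rowW, colV, Finset.sum_mul_sum, Finset.sum_mul_sum]
    refine Finset.sum_congr rfl fun t ht => ?_
    symm
    refine Finset.sum_subset (Finset.subset_univ _) fun c _ hc => ?_
    simp only [Finset.mem_filter, Finset.mem_univ, true_and] at ht hc
    exact matGen_mismatch _ _ _ _ _ _ fun e => hc (e.2 ht).symm
  have h2 : colV S_M S_N b.val.2 s = rowW S_M S_N b s.val.2 * colV S_M S_N b.val.2 s := by
    conv_lhs => rw [← one_mul (colV S_M S_N b.val.2 s), ← matGen_rowSum S_M S_N b]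
    rw [rowW, colV, Finset.sum_mul_sum, Finset.sum_mul_sum]
    symm
    refine Finset.sum_subset (Finset.subset_univ _) fun t _ ht => ?_
    refine Finset.sum_eq_zero fun c hc => ?_
    simp only [Finset.mem_filter, Finset.mem_univ, true_and] at ht hc
    exact matGen_mismatch _ _ _ _ _ _ fun e => ht (e.1 hc.symm)
  rw [h1, ← h2]

theorem rowW_mul_zero (b c : PtSet S_M) (x y : β) (h : ¬ (b.val.2 = c.val.2 ↔ x = y)) :
    rowW S_M S_N b x * rowW S_M S_N c y = 0 := by
  rw [rowW, rowW, Finset.sum_mul_sum]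
  refine Finset.sum_eq_zero fun t ht => Finset.sum_eq_zero fun s hs => ?_
  simp only [Finset.mem_filter, Finset.mem_univ, true_and] at ht hs
  subst ht hs
  exact matGen_mismatch _ _ _ _ _ _ h

theorem rowW_sum (E : Finset β) (hE : ∀ A ∈ S_N, A ⊆ E) (b : PtSet S_M) :
    ∑ x : {x // x ∈ E}, rowW S_M S_N b x.val = 1 := by
  rw [← matGen_rowSum S_M S_N b, Finset.sum_coe_sort E (fun x => rowW S_M S_N b x)]
  exact Finset.sum_fiberwise_of_maps_to (fun t _ => hE _ t.2.1 t.2.2) _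

theorem colV_sum (E : Finset α) (hE : ∀ A ∈ S_M, A ⊆ E) (s : PtSet S_N) :
    ∑ a : {a // a ∈ E}, colV S_M S_N a.val s = 1 := by
  rw [← matGen_colSum S_M S_N s, Finset.sum_coe_sort E (fun a => colV S_M S_N a s)]
  exact Finset.sum_fiberwise_of_maps_to (fun t _ => hE _ t.2.1 t.2.2) _

theorem rowW_idem (E : Finset β) (hE : ∀ A ∈ S_N, A ⊆ E) (b : PtSet S_M) (x : {x // x ∈ E}) :
    rowW S_M S_N b x.val * rowW S_M S_N b x.val = rowW S_M S_N b x.val := by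
  conv_rhs => rw [← mul_one (rowW S_M S_N b x.val), ← rowW_sum S_M S_N E hE b, Finset.mul_sum]
  symm
  refine Finset.sum_eq_single x (fun y _ hy => ?_) (by simp)
  exact rowW_mul_zero _ _ _ _ _ _ fun e => hy (Subtype.ext (e.1 rfl).symm)

end helpers

theorem stmt15 {α β : Type*} [Fintype α] [Fintype β] [DecidableEq α] [DecidableEq β]
    (M : PreMatroid α) (N : PreMatroid β) (hM : M.IsMatroid) (hN : N.IsMatroid)
    (S_M : Finset (Finset α)) (S_N : Finset (Finset β))
    (hSM : ∀ A ∈ S_M, A ⊆ M.E) (hSN : ∀ A ∈ S_N, A ⊆ N.E)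
    (hcovM : Covers S_M M.E) (hcovN : Covers S_N N.E) :
    ∃ φ : MagicAlgebra {a // a ∈ M.E} {x // x ∈ N.E} →ₐ[ℂ] MatIsoAlgebra S_M S_N,
      ∀ (b : {a // a ∈ M.E} → PtSet S_M), (∀ a, (b a).val.2 = a.val) →
        ∀ (a : {a // a ∈ M.E}) (x : {x // x ∈ N.E}),
          φ (magicGen {a // a ∈ M.E} {x // x ∈ N.E} a x) =
            ∑ t ∈ Finset.univ.filter (fun t : PtSet S_N => t.val.2 = x.val),
              matGen S_M S_N (b a) t := by
  classical
  have hb : ∀ a : {a // a ∈ M.E}, ∃ b : PtSet S_M, b.val.2 = a.val := fun a => by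
    obtain ⟨A, hA, ha⟩ := hcovM a.1 a.2
    exact ⟨⟨(A, a.1), hA, ha⟩, rfl⟩
  have hs : ∀ x : {x // x ∈ N.E}, ∃ s : PtSet S_N, s.val.2 = x.val := fun x => by
    obtain ⟨A, hA, ha⟩ := hcovN x.1 x.2
    exact ⟨⟨(A, x.1), hA, ha⟩, rfl⟩
  choose b₀ hb₀ using hb
  choose s₀ hs₀ using hs
  have key : ∀ (b : PtSet S_M) (a : α) (x : {x // x ∈ N.E}), b.val.2 = a →
      rowW S_M S_N b x.val = colV S_M S_N a (s₀ x) := by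
    intro b a x h
    rw [← hs₀ x, ← h, rowW_eq_colV]
  let f : FreeAlgebra ℂ ({a // a ∈ M.E} × {x // x ∈ N.E}) →ₐ[ℂ] MatIsoAlgebra S_M S_N :=
    FreeAlgebra.lift ℂ fun p => rowW S_M S_N (b₀ p.1) p.2.val
  have hfι : ∀ a x, f (FreeAlgebra.ι ℂ (a, x)) = rowW S_M S_N (b₀ a) x.val := fun a x => by
    simp [f]
  have hf : ∀ ⦃u v⦄, MagicRel {a // a ∈ M.E} {x // x ∈ N.E} u v → f u = f v := by
    intro u v h
    induction h with
    | idem a x => rw [map_mul, hfι, rowW_idem S_M S_N N.E hSN]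
    | row a h =>
      rw [map_mul, hfι, hfι, map_zero]
      exact rowW_mul_zero _ _ _ _ _ _ fun e => h (Subtype.ext (e.1 rfl))
    | col x h =>
      rw [map_mul, hfι, hfι, map_zero]
      refine rowW_mul_zero _ _ _ _ _ _ fun e => h (Subtype.ext ?_)
      rw [← hb₀, ← hb₀]
      exact e.2 rfl
    | rowSum a =>
      rw [map_sum, map_one]
      simp only [hfι]
      exact rowW_sum S_M S_N N.E hSN _
    | colSum x =>
      rw [map_sum, map_one]
      simp only [hfι]
      rw [← colV_sum S_M S_N M.E hSM (s₀ x)]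
      exact Finset.sum_congr rfl fun a _ => key _ _ _ (hb₀ a)
  refine ⟨RingQuot.liftAlgHom ℂ ⟨f, hf⟩, fun b hb a x => ?_⟩
  rw [magicGen, RingQuot.liftAlgHom_mkAlgHom_apply, hfι, key _ _ _ (hb₀ a), ← key _ _ _ (hb a)]
  rfl

end MatroidGame
end

section
/- Let L, M, N be matroids with collections S_L ⊆ 2^{E(L)}, S_M ⊆ 2^{E(M)}, S_N ⊆ 2^{E(N)}. Then the assignment u_{ax} ↦ Σ_{s ∈ S•(M)} u_{as} ⊗ u_{sx} (for a ∈ S•(L), x ∈ S•(N)) induces a well-defined unital ℂ-algebra homomorphism Δ : 𝔄•(L,N,S) → 𝔄•(L,M,S) ⊗ 𝔄•(M,N,S). -/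
open scoped BigOperators TensorProduct

namespace MatroidGame

open PreMatroid

section Comul

variable {I J K : Type*} [Fintype I] [Fintype J] [Fintype K]
  (rI : I → I → ℕ) (rJ : J → J → ℕ) (rK : K → K → ℕ)

lemma isoGen_mul_self (a : I) (x : J) :
    isoGen I J rI rJ a x * isoGen I J rI rJ a x = isoGen I J rI rJ a x := by
  have h := RingQuot.mkAlgHom_rel ℂ (IsoRel.magic (rI := rI) (rJ := rJ) (MagicRel.idem a x))
  rwa [map_mul] at h

lemma isoGen_row (a : I) {x y : J} (hxy : x ≠ y) :
    isoGen I J rI rJ a x * isoGen I J rI rJ a y = 0 := by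
  have h := RingQuot.mkAlgHom_rel ℂ (IsoRel.magic (rI := rI) (rJ := rJ) (MagicRel.row a hxy))
  rwa [map_mul, map_zero] at h

lemma isoGen_col {a b : I} (x : J) (hab : a ≠ b) :
    isoGen I J rI rJ a x * isoGen I J rI rJ b x = 0 := by
  have h := RingQuot.mkAlgHom_rel ℂ (IsoRel.magic (rI := rI) (rJ := rJ) (MagicRel.col x hab))
  rwa [map_mul, map_zero] at h

lemma isoGen_rowSum (a : I) : ∑ x : J, isoGen I J rI rJ a x = 1 := by
  have h := RingQuot.mkAlgHom_rel ℂ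
    (IsoRel.magic (rI := rI) (rJ := rJ) (MagicRel.rowSum (J := J) a))
  rwa [map_sum, map_one] at h

lemma isoGen_colSum (x : J) : ∑ a : I, isoGen I J rI rJ a x = 1 := by
  have h := RingQuot.mkAlgHom_rel ℂ
    (IsoRel.magic (rI := rI) (rJ := rJ) (MagicRel.colSum (I := I) x))
  rwa [map_sum, map_one] at h

lemma isoGen_mismatch (a b : I) (x y : J) (hr : rI a b ≠ rJ x y) :
    isoGen I J rI rJ a x * isoGen I J rI rJ b y = 0 := by
  have h := RingQuot.mkAlgHom_rel ℂ (IsoRel.mismatch (rI := rI) (rJ := rJ) a b x y hr)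
  rwa [map_mul, map_zero] at h

/-- The image of a generator under the comultiplication. -/
noncomputable def comulGen (a : I) (x : K) :
    IsoAlgebra I J rI rJ ⊗[ℂ] IsoAlgebra J K rJ rK :=
  ∑ s : J, isoGen I J rI rJ a s ⊗ₜ[ℂ] isoGen J K rJ rK s x

lemma comulGen_mul (a b : I) (x y : K) :
    comulGen rI rJ rK a x * comulGen rI rJ rK b y =
      ∑ s : J, ∑ t : J, (isoGen I J rI rJ a s * isoGen I J rI rJ b t) ⊗ₜ[ℂ]
        (isoGen J K rJ rK s x * isoGen J K rJ rK t y) := by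
  simp only [comulGen, Finset.sum_mul_sum, Algebra.TensorProduct.tmul_mul_tmul]

lemma comulGen_rel {u v : FreeAlgebra ℂ (I × K)} (h : IsoRel I K rI rK u v) :
    FreeAlgebra.lift ℂ (fun p : I × K => comulGen rI rJ rK p.1 p.2) u =
      FreeAlgebra.lift ℂ (fun p : I × K => comulGen rI rJ rK p.1 p.2) v := by
  cases h with
  | magic h =>
    cases h with
    | idem a x =>
      simp only [map_mul, FreeAlgebra.lift_ι_apply]
      rw [comulGen_mul, comulGen]
      refine Finset.sum_congr rfl fun s _ => ?_
      rw [Finset.sum_eq_single s]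
      · rw [isoGen_mul_self, isoGen_mul_self]
      · intro t _ hts
        rw [isoGen_row rI rJ a hts.symm, TensorProduct.zero_tmul]
      · simp
    | @row a x y hxy =>
      simp only [map_mul, map_zero, FreeAlgebra.lift_ι_apply]
      rw [comulGen_mul]
      refine Finset.sum_eq_zero fun s _ => Finset.sum_eq_zero fun t _ => ?_
      by_cases hst : s = t
      · subst hst
        rw [isoGen_row rJ rK s hxy, TensorProduct.tmul_zero]
      · rw [isoGen_row rI rJ a hst, TensorProduct.zero_tmul]
    | @col a b x hab =>
      simp only [map_mul, map_zero, FreeAlgebra.lift_ι_apply]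
      rw [comulGen_mul]
      refine Finset.sum_eq_zero fun s _ => Finset.sum_eq_zero fun t _ => ?_
      by_cases hst : s = t
      · subst hst
        rw [isoGen_col rI rJ s hab, TensorProduct.zero_tmul]
      · rw [isoGen_col rJ rK x hst, TensorProduct.tmul_zero]
    | rowSum a =>
      simp only [map_sum, map_one, FreeAlgebra.lift_ι_apply, comulGen]
      rw [Finset.sum_comm]
      simp only [← TensorProduct.tmul_sum, isoGen_rowSum]
      rw [← TensorProduct.sum_tmul, isoGen_rowSum, Algebra.TensorProduct.one_def]
    | colSum x =>
      simp only [map_sum, map_one, FreeAlgebra.lift_ι_apply, comulGen]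
      rw [Finset.sum_comm]
      simp only [← TensorProduct.sum_tmul, isoGen_colSum]
      rw [← TensorProduct.tmul_sum, isoGen_colSum, Algebra.TensorProduct.one_def]
  | mismatch a b x y hr =>
    simp only [map_mul, map_zero, FreeAlgebra.lift_ι_apply]
    rw [comulGen_mul]
    refine Finset.sum_eq_zero fun s _ => Finset.sum_eq_zero fun t _ => ?_
    by_cases hst : rI a b = rJ s t
    · rw [isoGen_mismatch rJ rK s t x y (hst ▸ hr), TensorProduct.tmul_zero]
    · rw [isoGen_mismatch rI rJ a b s t hst, TensorProduct.zero_tmul]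

end Comul

theorem stmt16 {α β γ : Type*} [Fintype α] [Fintype β] [Fintype γ]
    [DecidableEq α] [DecidableEq β] [DecidableEq γ]
    (L : PreMatroid α) (M : PreMatroid β) (N : PreMatroid γ)
    (hL : L.IsMatroid) (hM : M.IsMatroid) (hN : N.IsMatroid)
    (S_L : Finset (Finset α)) (S_M : Finset (Finset β)) (S_N : Finset (Finset γ))
    (hSL : ∀ A ∈ S_L, A ⊆ L.E) (hSM : ∀ A ∈ S_M, A ⊆ M.E) (hSN : ∀ A ∈ S_N, A ⊆ N.E) :
    ∃ Δ : MatIsoAlgebra S_L S_N →ₐ[ℂ]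
        (MatIsoAlgebra S_L S_M ⊗[ℂ] MatIsoAlgebra S_M S_N),
      ∀ (a : PtSet S_L) (x : PtSet S_N),
        Δ (matGen S_L S_N a x) =
          ∑ s : PtSet S_M, matGen S_L S_M a s ⊗ₜ[ℂ] matGen S_M S_N s x := by
  refine ⟨RingQuot.liftAlgHom ℂ ⟨FreeAlgebra.lift ℂ (fun p : PtSet S_L × PtSet S_N =>
    comulGen (ptRel S_L) (ptRel S_M) (ptRel S_N) p.1 p.2),
    fun _ _ h => comulGen_rel _ _ _ h⟩, fun a x => ?_⟩
  rw [matGen, isoGen, RingQuot.liftAlgHom_mkAlgHom_apply, FreeAlgebra.lift_ι_apply]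
  rfl


end MatroidGame
end

section
/- Let M be a matroid with a collection S_M ⊆ 2^{E(M)} such that S_M covers M, and suppose that for every bijection φ : E(M) → E(M): φ is a matroid automorphism of M if and only if (A ∈ S_M if and only if φ(A) ∈ S_M, for all A ⊆ E(M)). Let Aut•(M,S) be the group of permutations of S•(M) of the form (A,p) ↦ (φ(A), φ(p)) for matroid automorphisms φ of M. Then the quotient of the algebra 𝔄(M,S) by the two-sided ideal generated by all commutators u_{ax}u_{by} − u_{by}u_{ax} is isomorphic, as a unital ℂ-algebra, to the algebra of all ℂ-valued functions on the finite group Aut•(M,S) with pointwise operations. -/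
open scoped BigOperators TensorProduct

namespace MatroidGame

open PreMatroid

/-- The commutator relations on the quantum automorphism algebra `𝔄(M,S)`. -/
inductive CommRel {α : Type*} [Fintype α] [DecidableEq α] (S : Finset (Finset α)) :
    MatIsoAlgebra S S → MatIsoAlgebra S S → Prop
  | comm (a b x y : PtSet S) :
      CommRel S (matGen S S a x * matGen S S b y) (matGen S S b y * matGen S S a x)

/-- The permutations of `S•(M)` induced by matroid automorphisms of `M`. -/
def autPt {α : Type*} [Fintype α] [DecidableEq α] (M : PreMatroid α)
    (S : Finset (Finset α)) : Set (Equiv.Perm (PtSet S)) :=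
  {π | ∃ φ : α → α, M.IsIsoMap M φ ∧
    ∀ v : PtSet S, (π v).val = (v.val.1.image φ, φ v.val.2)}

/-- Abstract form: a commutative algebra generated by a magic unitary whose nonvanishing
products are indexed by `G` is the function algebra on `G`. -/
theorem key_iso {I C : Type*} [Fintype I] [DecidableEq I] [CommRing C] [Algebra ℂ C]
    (u : I → I → C) (G : Set (Equiv.Perm I))
    (idem : ∀ a x, u a x * u a x = u a x)
    (row : ∀ a x y, x ≠ y → u a x * u a y = 0)
    (rowSum : ∀ a, ∑ x, u a x = 1)
    (hz : ∀ f : I → I, (∀ π ∈ G, (⇑π : I → I) ≠ f) → ∏ a, u a (f a) = 0)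
    (hgen : Algebra.adjoin ℂ (Set.range fun p : I × I => u p.1 p.2) = ⊤)
    (F : C →ₐ[ℂ] (G → ℂ))
    (hF : ∀ a x, F (u a x) = fun π => if π.1 a = x then 1 else 0) :
    Nonempty (C ≃ₐ[ℂ] (G → ℂ)) := by
  classical
  let e : G → C := fun π => ∏ a, u a (π.1 a)
  have he : ∀ a x (π : G), u a x * e π = if π.1 a = x then e π else 0 := by
    intro a x π
    have h1 : e π = u a (π.1 a) * ∏ b ∈ Finset.univ.erase a, u b (π.1 b) :=
      (Finset.mul_prod_erase _ (fun b => u b (π.1 b)) (Finset.mem_univ a)).symm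
    split_ifs with h
    · subst h
      rw [h1, ← mul_assoc, idem]
    · rw [h1, ← mul_assoc, row a _ _ (Ne.symm h), zero_mul]
  have hsum : ∑ π : G, e π = 1 := by
    have h1 : (1 : C) = ∑ f : I → I, ∏ a, u a (f a) := by
      rw [← Fintype.prod_sum]
      simp [rowSum]
    rw [h1]
    have h2 : ∑ π : G, e π = ∑ f ∈ Finset.univ.image (fun π : G => (⇑π.1 : I → I)),
        ∏ a, u a (f a) := by
      rw [Finset.sum_image]
      intro π _ σ _ h
      exact Subtype.ext (DFunLike.coe_injective h)
    rw [h2]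
    apply Finset.sum_subset (Finset.subset_univ _)
    intro f _ hf
    apply hz
    intro π hπ h
    exact hf (Finset.mem_image.2 ⟨⟨π, hπ⟩, Finset.mem_univ _, h⟩)
  have hFe : ∀ π : G, F (e π) = Pi.single π 1 := by
    intro π
    simp only [e, map_prod, hF]
    funext σ
    rw [Finset.prod_apply]
    by_cases h : σ = π
    · subst h; simp
    · rw [Pi.single_eq_of_ne h]
      have : ∃ a, σ.1 a ≠ π.1 a := by
        by_contra! h'
        exact h (Subtype.ext (Equiv.ext h'))
      obtain ⟨a, ha⟩ := this
      exact Finset.prod_eq_zero (Finset.mem_univ a) (if_neg ha)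
  have hinv : ∀ c : C, ∀ π : G, c * e π = F c π • e π := by
    intro c
    have hc : c ∈ Algebra.adjoin ℂ (Set.range fun p : I × I => u p.1 p.2) := by
      rw [hgen]; trivial
    induction hc using Algebra.adjoin_induction with
    | mem x hx =>
      obtain ⟨p, rfl⟩ := hx
      intro π
      simp only [hF, he]
      split_ifs <;> simp
    | algebraMap r => intro π; simp [Algebra.smul_def]
    | add x y _ _ hx hy => intro π; simp [add_mul, hx, hy, add_smul]
    | mul x y _ _ hx hy =>
      intro π
      rw [mul_assoc, hy, mul_smul_comm, hx, smul_smul, map_mul, Pi.mul_apply, mul_comm]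
  refine ⟨AlgEquiv.ofBijective F ⟨?_, ?_⟩⟩
  · rw [injective_iff_map_eq_zero]
    intro c hc
    rw [← mul_one c, ← hsum, Finset.mul_sum]
    exact Finset.sum_eq_zero fun π _ => by rw [hinv, hc]; simp
  · intro f
    refine ⟨∑ π, f π • e π, ?_⟩
    simp only [map_sum, map_smul, hFe]
    funext σ
    simp [Finset.sum_apply, Pi.single_apply]

theorem relNum_eq_iff {α : Type*} [DecidableEq α] (a b c d : Finset α × α) :
    relNum a b = relNum c d ↔ ((a.1 = b.1 ↔ c.1 = d.1) ∧ (a.2 = b.2 ↔ c.2 = d.2)) := by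
  unfold relNum
  split_ifs <;> simp_all

theorem mem_autPt_iff {α : Type*} [Fintype α] [DecidableEq α]
    (M : PreMatroid α)
    (S : Finset (Finset α)) (hS : ∀ A ∈ S, A ⊆ M.E) (hcov : Covers S M.E)
    (hdet : ∀ φ : α → α, Set.BijOn φ ↑M.E ↑M.E →
      (M.IsIsoMap M φ ↔ ∀ A : Finset α, A ⊆ M.E → (A ∈ S ↔ A.image φ ∈ S)))
    (π : Equiv.Perm (PtSet S)) :
    π ∈ autPt M S ↔ ∀ a b, ptRel S a b = ptRel S (π a) (π b) := by
  constructor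
  · rintro ⟨φ, hφ, h⟩ a b
    have hinj : Set.InjOn φ ↑M.E := hφ.1.injOn
    have ha := hS _ a.2.1
    have hb := hS _ b.2.1
    rw [ptRel, relNum_eq_iff, h, h]
    refine ⟨⟨fun e => by simp [e], fun e => ?_⟩, ⟨fun e => by simp [e], fun e => ?_⟩⟩
    · simp only at e
      have e' : φ '' (a.1.1 : Set α) = φ '' (b.1.1 : Set α) := by
        rw [← Finset.coe_image, ← Finset.coe_image, e]
      have := (hinj.image_eq_image_iff (Finset.coe_subset.2 ha) (Finset.coe_subset.2 hb)).1 e'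
      exact_mod_cast this
    · exact hinj (ha a.2.2) (hb b.2.2) e
  · intro h
    have h1 : ∀ a b : PtSet S, a.1.1 = b.1.1 ↔ (π a).1.1 = (π b).1.1 :=
      fun a b => ((relNum_eq_iff _ _ _ _).1 (h a b)).1
    have h2 : ∀ a b : PtSet S, a.1.2 = b.1.2 ↔ (π a).1.2 = (π b).1.2 :=
      fun a b => ((relNum_eq_iff _ _ _ _).1 (h a b)).2
    have hex : ∀ p : α, ∃ q : α, ∀ v : PtSet S, v.1.2 = p → (π v).1.2 = q := by
      intro p
      by_cases hp : ∃ v : PtSet S, v.1.2 = p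
      · obtain ⟨v, hv⟩ := hp
        exact ⟨(π v).1.2, fun w hw => (h2 w v).1 (hw.trans hv.symm)⟩
      · exact ⟨p, fun v hv => absurd ⟨v, hv⟩ hp⟩
    choose φ hφ using hex
    have hφ' : ∀ v : PtSet S, (π v).1.2 = φ v.1.2 := fun v => hφ _ v rfl
    have hpt : ∀ p ∈ M.E, ∃ v : PtSet S, v.1.2 = p := by
      intro p hp
      obtain ⟨A, hA, hpA⟩ := hcov p hp
      exact ⟨⟨(A, p), hA, hpA⟩, rfl⟩
    have hset : ∀ v : PtSet S, (π v).1.1 = v.1.1.image φ := by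
      intro v
      ext q
      simp only [Finset.mem_image]
      constructor
      · intro hq
        let w : PtSet S := ⟨((π v).1.1, q), (π v).2.1, hq⟩
        have hw : (π.symm w).1.1 = v.1.1 := by
          rw [h1]; simp [w]
        refine ⟨(π.symm w).1.2, hw ▸ (π.symm w).2.2, ?_⟩
        rw [← hφ']; simp [w]
      · rintro ⟨p, hp, rfl⟩
        let w : PtSet S := ⟨(v.1.1, p), v.2.1, hp⟩
        have hw : (π w).1.1 = (π v).1.1 := (h1 w v).1 rfl
        rw [← hw, ← hφ' w]
        exact (π w).2.2
    have hbij : Set.BijOn φ ↑M.E ↑M.E := by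
      refine ⟨?_, ?_, ?_⟩
      · intro p hp
        obtain ⟨v, rfl⟩ := hpt p hp
        rw [← hφ']
        exact hS _ (π v).2.1 (π v).2.2
      · intro p hp q hq e
        obtain ⟨v, rfl⟩ := hpt p hp
        obtain ⟨w, rfl⟩ := hpt q hq
        rw [← hφ', ← hφ'] at e
        exact (h2 v w).2 e
      · intro q hq
        obtain ⟨v, rfl⟩ := hpt q hq
        refine ⟨(π.symm v).1.2, hS _ (π.symm v).2.1 (π.symm v).2.2, ?_⟩
        rw [← hφ']; simp
    refine ⟨φ, (hdet φ hbij).2 ?_, fun v => Prod.ext (hset v) (hφ' v)⟩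
    intro A hA
    rcases A.eq_empty_or_nonempty with rfl | ⟨p, hp⟩
    · simp
    · constructor
      · intro hAS
        rw [← hset ⟨(A, p), hAS, hp⟩]
        exact (π _).2.1
      · intro hAS
        let w : PtSet S := ⟨(A.image φ, φ p), hAS, Finset.mem_image_of_mem _ hp⟩
        have e : (π.symm w).1.1.image φ = A.image φ := by
          rw [← hset]; simp [w]
        have hsub := hS _ (π.symm w).2.1
        have e' : φ '' ((π.symm w).1.1 : Set α) = φ '' (A : Set α) := by
          rw [← Finset.coe_image, ← Finset.coe_image, e]
        have := (hbij.injOn.image_eq_image_iff (Finset.coe_subset.2 hsub)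
          (Finset.coe_subset.2 hA)).1 e'
        have : (π.symm w).1.1 = A := by exact_mod_cast this
        rw [← this]
        exact (π.symm w).2.1

/-- The generators of the commutative quotient. -/
noncomputable def cGen {α : Type*} [Fintype α] [DecidableEq α] (S : Finset (Finset α))
    (a x : PtSet S) : RingQuot (CommRel S) :=
  RingQuot.mkAlgHom ℂ (CommRel S) (matGen S S a x)

theorem cGen_adjoin {α : Type*} [Fintype α] [DecidableEq α] (S : Finset (Finset α)) :
    Algebra.adjoin ℂ (Set.range fun p : PtSet S × PtSet S => cGen S p.1 p.2) = ⊤ := by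
  have h := FreeAlgebra.adjoin_range_ι (R := ℂ) (X := PtSet S × PtSet S)
  let Q := (RingQuot.mkAlgHom ℂ (CommRel S)).comp
    (RingQuot.mkAlgHom ℂ (IsoRel (PtSet S) (PtSet S) (ptRel S) (ptRel S)))
  have hQ : Function.Surjective Q :=
    (RingQuot.mkAlgHom_surjective ℂ _).comp (RingQuot.mkAlgHom_surjective ℂ _)
  have h' := congrArg (Subalgebra.map Q) h
  rw [AlgHom.map_adjoin, Algebra.map_top, (AlgHom.range_eq_top Q).2 hQ, ← Set.range_comp] at h'
  exact h'

theorem cGen_comm {α : Type*} [Fintype α] [DecidableEq α] (S : Finset (Finset α))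
    (c d : RingQuot (CommRel S)) : c * d = d * c := by
  have hg : ∀ p q : PtSet S × PtSet S,
      Commute (cGen S p.1 p.2) (cGen S q.1 q.2) := by
    intro p q
    have := RingQuot.mkAlgHom_rel ℂ (CommRel.comm (S := S) p.1 q.1 p.2 q.2)
    rw [map_mul, map_mul] at this
    exact this
  have mem : ∀ c, c ∈ Algebra.adjoin ℂ
      (Set.range fun p : PtSet S × PtSet S => cGen S p.1 p.2) := by
    intro c; rw [cGen_adjoin]; trivial
  have h1 : ∀ p : PtSet S × PtSet S, ∀ c, Commute c (cGen S p.1 p.2) := by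
    intro p c
    induction mem c using Algebra.adjoin_induction with
    | mem x hx => obtain ⟨q, rfl⟩ := hx; exact hg q p
    | algebraMap r => exact Algebra.commutes r _
    | add x y _ _ hx hy => exact hx.add_left hy
    | mul x y _ _ hx hy => exact hx.mul_left hy
  have h2 : ∀ c d : RingQuot (CommRel S), Commute c d := by
    intro c d
    induction mem d using Algebra.adjoin_induction with
    | mem x hx => obtain ⟨q, rfl⟩ := hx; exact h1 q c
    | algebraMap r => exact (Algebra.commutes r _).symm
    | add x y _ _ hx hy => exact hx.add_right hy
    | mul x y _ _ hx hy => exact hx.mul_right hy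
  exact h2 c d

theorem cGen_rel {α : Type*} [Fintype α] [DecidableEq α] (S : Finset (Finset α))
    {s t : FreeAlgebra ℂ (PtSet S × PtSet S)}
    (h : IsoRel (PtSet S) (PtSet S) (ptRel S) (ptRel S) s t) :
    ((RingQuot.mkAlgHom ℂ (CommRel S)).comp
      (RingQuot.mkAlgHom ℂ (IsoRel (PtSet S) (PtSet S) (ptRel S) (ptRel S)))) s =
    ((RingQuot.mkAlgHom ℂ (CommRel S)).comp
      (RingQuot.mkAlgHom ℂ (IsoRel (PtSet S) (PtSet S) (ptRel S) (ptRel S)))) t := by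
  simp only [AlgHom.comp_apply]
  rw [RingQuot.mkAlgHom_rel ℂ h]

/-- The evaluation homomorphism before taking the commutative quotient. -/
theorem exists_eval {α : Type*} [Fintype α] [DecidableEq α] (S : Finset (Finset α))
    (G : Set (Equiv.Perm (PtSet S)))
    (hG : ∀ π ∈ G, ∀ a b, ptRel S a b = ptRel S (π a) (π b)) :
    ∃ F : RingQuot (CommRel S) →ₐ[ℂ] (G → ℂ),
      ∀ a x, F (cGen S a x) = fun π => if π.1 a = x then 1 else 0 := by
  let F0 : FreeAlgebra ℂ (PtSet S × PtSet S) →ₐ[ℂ] (G → ℂ) :=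
    FreeAlgebra.lift ℂ fun p => fun π => if π.1 p.1 = p.2 then 1 else 0
  have hF0 : ∀ a x, F0 (FreeAlgebra.ι ℂ (a, x)) = fun π => if π.1 a = x then 1 else 0 := by
    intro a x; simp [F0]
  have r1 : ∀ ⦃s t⦄, IsoRel (PtSet S) (PtSet S) (ptRel S) (ptRel S) s t → F0 s = F0 t := by
    intro s t h
    cases h with
    | magic h =>
      cases h with
      | idem a x => rw [map_mul, hF0]; funext π; simp
      | row a h =>
        rw [map_mul, hF0, hF0, map_zero]; funext π
        simp only [Pi.mul_apply, Pi.zero_apply]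
        split_ifs with h1 h2 <;> simp
        exact h (h1.symm.trans h2)
      | col x h =>
        rw [map_mul, hF0, hF0, map_zero]; funext π
        simp only [Pi.mul_apply, Pi.zero_apply]
        split_ifs with h1 h2 <;> simp
        exact h (π.1.injective (h1.trans h2.symm))
      | rowSum a =>
        rw [map_sum, map_one]; funext π
        simp [hF0, Finset.sum_apply]
      | colSum x =>
        rw [map_sum, map_one]; funext π
        simp [hF0, Finset.sum_apply, ← Equiv.eq_symm_apply]
    | mismatch a b x y h =>
      rw [map_mul, hF0, hF0, map_zero]; funext π
      simp only [Pi.mul_apply, Pi.zero_apply]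
      split_ifs with h1 h2 <;> simp
      subst h1 h2
      exact h (hG π.1 π.2 a b)
  let F1 : MatIsoAlgebra S S →ₐ[ℂ] (G → ℂ) := RingQuot.liftAlgHom ℂ ⟨F0, r1⟩
  have r2 : ∀ ⦃s t⦄, CommRel S s t → F1 s = F1 t := by
    intro s t h
    cases h
    rw [map_mul, map_mul, mul_comm]
  refine ⟨RingQuot.liftAlgHom ℂ ⟨F1, r2⟩, fun a x => ?_⟩
  rw [← hF0, cGen, RingQuot.liftAlgHom_mkAlgHom_apply]
  exact RingQuot.liftAlgHom_mkAlgHom_apply ..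

/-- A helper: in a commutative ring, a product with two factors multiplying to zero vanishes. -/
theorem prod_zero_of_pair {I C : Type*} [Fintype I] [DecidableEq I] [CommRing C] (g : I → C)
    (a b : I) (hab : a ≠ b) (h : g a * g b = 0) : ∏ i, g i = 0 := by
  rw [← Finset.mul_prod_erase _ g (Finset.mem_univ a),
    ← Finset.mul_prod_erase _ g (Finset.mem_erase.2 ⟨hab.symm, Finset.mem_univ b⟩),
    ← mul_assoc, h, zero_mul]

theorem stmt17 {α : Type*} [Fintype α] [DecidableEq α]
    (M : PreMatroid α) (hM : M.IsMatroid)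
    (S : Finset (Finset α)) (hS : ∀ A ∈ S, A ⊆ M.E) (hcov : Covers S M.E)
    (hdet : ∀ φ : α → α, Set.BijOn φ ↑M.E ↑M.E →
      (M.IsIsoMap M φ ↔ ∀ A : Finset α, A ⊆ M.E → (A ∈ S ↔ A.image φ ∈ S))) :
    Nonempty (RingQuot (CommRel S) ≃ₐ[ℂ] (↥(autPt M S) → ℂ)) := by
  classical
  have hmem := mem_autPt_iff M S hS hcov hdet
  obtain ⟨F, hF⟩ := exists_eval S (autPt M S) (fun π hπ => (hmem π).1 hπ)
  letI : CommRing (RingQuot (CommRel S)) :=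
    { (inferInstance : Ring (RingQuot (CommRel S))) with mul_comm := cGen_comm S }
  have row : ∀ a x y : PtSet S, x ≠ y → cGen S a x * cGen S a y = 0 := fun a x y h => by
    have := cGen_rel S (.magic (.row a h))
    rw [map_mul, map_zero] at this
    exact this
  have col : ∀ a b x : PtSet S, a ≠ b → cGen S a x * cGen S b x = 0 := fun a b x h => by
    have := cGen_rel S (.magic (.col x h))
    rw [map_mul, map_zero] at this
    exact this
  have idem : ∀ a x : PtSet S, cGen S a x * cGen S a x = cGen S a x := fun a x => by
    have := cGen_rel S (.magic (.idem a x))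
    rw [map_mul] at this
    exact this
  have rowSum : ∀ a : PtSet S, ∑ x, cGen S a x = 1 := fun a => by
    have := cGen_rel S (.magic (.rowSum a))
    rw [map_sum, map_one] at this
    exact this
  have mis : ∀ a b x y : PtSet S, ptRel S a b ≠ ptRel S x y →
      cGen S a x * cGen S b y = 0 := fun a b x y h => by
    have := cGen_rel S (.mismatch a b x y h)
    rw [map_mul, map_zero] at this
    exact this
  refine key_iso (cGen S) (autPt M S) idem row rowSum ?_ (cGen_adjoin S) F hF
  intro f hf
  by_cases hinj : Function.Injective f
  · let π : Equiv.Perm (PtSet S) := Equiv.ofBijective f (Finite.injective_iff_bijective.1 hinj)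
    have hπ : π ∉ autPt M S := fun h => hf π h rfl
    rw [hmem] at hπ
    push Not at hπ
    obtain ⟨a, b, hab⟩ := hπ
    have hne : a ≠ b := by
      rintro rfl
      exact hab (by simp [relNum])
    exact prod_zero_of_pair _ a b hne (mis a b _ _ hab)
  · simp only [Function.Injective] at hinj
    push Not at hinj
    obtain ⟨a, b, hab, hne⟩ := hinj
    refine prod_zero_of_pair _ a b hne ?_
    simp only [hab]
    exact col a b _ hne

end MatroidGame
end

section
/- Let M be a matroid with a collection S_M ⊆ 2^{E(M)} such that S_M covers M. Suppose there exist permutations π and τ of S•(M), both different from the identity, such that rel_M(π(a), π(b)) = rel_M(a,b) and rel_M(τ(a), τ(b)) = rel_M(a,b) for all a, b ∈ S•(M), and such that π and τ are disjoint, i.e., for every v ∈ S•(M), π(v) ≠ v implies τ(v) = v, and τ(v) ≠ v implies π(v) = v. Then the algebra 𝔄(M,S) is noncommutative. -/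
open scoped BigOperators TensorProduct

namespace MatroidGame

open PreMatroid

/-- A nonclassical magic unitary built from two idempotents and two permutations. -/
noncomputable def mixU {I A : Type*} [DecidableEq I] [Ring A] (p q : A) (π τ : Equiv.Perm I)
    (a x : I) : A :=
  (if x = a then 1 else 0) + p * ((if x = π a then 1 else 0) - (if x = a then 1 else 0))
    + q * ((if x = τ a then 1 else 0) - (if x = a then 1 else 0))

section mix

variable {I A : Type*} [DecidableEq I] [Ring A] (p q : A) (π τ : Equiv.Perm I)

theorem mixU_left (a x : I) (h : τ a = a) :
    mixU p q π τ a x = (if x = a then 1 - p else 0) + (if x = π a then p else 0) := by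
  unfold mixU
  rw [h]
  split_ifs <;> simp [sub_eq_add_neg]

theorem mixU_right (a x : I) (h : π a = a) :
    mixU p q π τ a x = (if x = a then 1 - q else 0) + (if x = τ a then q else 0) := by
  unfold mixU
  rw [h]
  split_ifs <;> simp [sub_eq_add_neg]

theorem mixU_rowSum [Fintype I] (a : I) : ∑ x, mixU p q π τ a x = 1 := by
  simp [mixU, Finset.sum_add_distrib, ← Finset.mul_sum, Finset.sum_sub_distrib]

theorem mixU_colSum [Fintype I] (x : I) : ∑ a, mixU p q π τ a x = 1 := by
  have h : ∀ σ : Equiv.Perm I, ∀ a, (x = σ a) = (σ⁻¹ x = a) := by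
    intro σ a
    rw [Equiv.Perm.inv_eq_iff_eq]
  simp [mixU, Finset.sum_add_distrib, ← Finset.mul_sum, Finset.sum_sub_distrib, h]

theorem mixU_idem (hp : p * p = p) (hq : q * q = q) (hd : ∀ v, τ v = v ∨ π v = v) (a x : I) :
    mixU p q π τ a x * mixU p q π τ a x = mixU p q π τ a x := by
  rcases hd a with h | h
  · rw [mixU_left _ _ _ _ _ _ h]
    split_ifs <;> simp [mul_sub, sub_mul, hp]
  · rw [mixU_right _ _ _ _ _ _ h]
    split_ifs <;> simp [mul_sub, sub_mul, hq]

theorem mixU_mismatch (hp : p * p = p) (hq : q * q = q) (hd : ∀ v, τ v = v ∨ π v = v)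
    (r : I → I → ℕ) (h1 : ∀ a b, r (π a) (π b) = r a b) (h2 : ∀ a b, r (τ a) (τ b) = r a b)
    (a b x y : I) (hr : r a b ≠ r x y) :
    mixU p q π τ a x * mixU p q π τ b y = 0 := by
  have e1 := h1 a b
  have e2 := h2 a b
  have e3 := h1 a (τ b)
  have e4 := h2 a (π b)
  rcases hd a with ha | ha <;> rcases hd b with hb | hb
  · rw [mixU_left _ _ _ _ _ _ ha, mixU_left _ _ _ _ _ _ hb]
    split_ifs <;> simp [mul_sub, sub_mul, hp] <;> grind
  · rw [mixU_left _ _ _ _ _ _ ha, mixU_right _ _ _ _ _ _ hb]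
    have e5 : π (τ b) = τ b := by
      rcases hd (τ b) with h | h
      · rw [τ.injective h]; exact hb
      · exact h
    split_ifs <;> simp [mul_sub, sub_mul] <;> grind
  · rw [mixU_right _ _ _ _ _ _ ha, mixU_left _ _ _ _ _ _ hb]
    have e5 : τ (π b) = π b := by
      rcases hd (π b) with h | h
      · exact h
      · rw [π.injective h]; exact hb
    split_ifs <;> simp [mul_sub, sub_mul] <;> grind
  · rw [mixU_right _ _ _ _ _ _ ha, mixU_right _ _ _ _ _ _ hb]
    split_ifs <;> simp [mul_sub, sub_mul, hq] <;> grind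

end mix

theorem relNum_eq_zero {α : Type*} [DecidableEq α] (a b : Finset α × α) :
    relNum a b = 0 ↔ a = b := by
  unfold relNum
  rw [Prod.ext_iff]
  split_ifs <;> simp_all

theorem stmt18 {α : Type*} [Fintype α] [DecidableEq α]
    (M : PreMatroid α) (hM : M.IsMatroid)
    (S : Finset (Finset α)) (hS : ∀ A ∈ S, A ⊆ M.E) (hcov : Covers S M.E)
    (π τ : Equiv.Perm (PtSet S)) (hπ : π ≠ 1) (hτ : τ ≠ 1)
    (hπrel : ∀ a b : PtSet S, relNum (π a).val (π b).val = relNum a.val b.val)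
    (hτrel : ∀ a b : PtSet S, relNum (τ a).val (τ b).val = relNum a.val b.val)
    (hdisj : ∀ v : PtSet S, (π v ≠ v → τ v = v) ∧ (τ v ≠ v → π v = v)) :
    ∃ x y : MatIsoAlgebra S S, x * y ≠ y * x := by
  classical
  have hd : ∀ v, τ v = v ∨ π v = v := by
    intro v
    by_cases h : π v = v
    · exact Or.inr h
    · exact Or.inl ((hdisj v).1 h)
  obtain ⟨a, ha⟩ : ∃ a, π a ≠ a := by
    by_contra! h
    exact hπ (Equiv.ext h)
  obtain ⟨b, hb⟩ : ∃ b, τ b ≠ b := by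
    by_contra! h
    exact hτ (Equiv.ext h)
  let p : Matrix (Fin 2) (Fin 2) ℂ := !![1, 0; 0, 0]
  let q : Matrix (Fin 2) (Fin 2) ℂ := !![1, 1; 0, 0]
  have hp : p * p = p := by ext i j; fin_cases i <;> fin_cases j <;> simp [p]
  have hq : q * q = q := by ext i j; fin_cases i <;> fin_cases j <;> simp [q]
  have hpq : p * q ≠ q * p := by
    intro h
    have := congrFun (congrFun h 0) 1
    simp [p, q] at this
  have hmis := mixU_mismatch p q π τ hp hq hd (ptRel S) hπrel hτrel
  let f : FreeAlgebra ℂ (PtSet S × PtSet S) →ₐ[ℂ] Matrix (Fin 2) (Fin 2) ℂ :=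
    FreeAlgebra.lift ℂ (fun z => mixU p q π τ z.1 z.2)
  have hf : ∀ c x, f (FreeAlgebra.ι ℂ (c, x)) = mixU p q π τ c x := by
    intro c x
    simp [f]
  have hrel : ∀ ⦃u v⦄, IsoRel (PtSet S) (PtSet S) (ptRel S) (ptRel S) u v → f u = f v := by
    intro u v h
    cases h with
    | magic h =>
      cases h with
      | idem c x => rw [map_mul, hf, mixU_idem p q π τ hp hq hd]
      | @row c x y h =>
        rw [map_mul, hf, hf, map_zero]
        apply hmis
        intro h'
        have h0 : ptRel S c c = 0 := (relNum_eq_zero _ _).2 rfl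
        exact h (Subtype.ext ((relNum_eq_zero _ _).1 (h'.symm.trans h0)))
      | @col c d x h =>
        rw [map_mul, hf, hf, map_zero]
        apply hmis
        intro h'
        have h0 : ptRel S x x = 0 := (relNum_eq_zero _ _).2 rfl
        exact h (Subtype.ext ((relNum_eq_zero _ _).1 (h'.trans h0)))
      | rowSum c =>
        rw [map_sum, map_one]
        simp only [hf]
        exact mixU_rowSum p q π τ c
      | colSum x =>
        rw [map_sum, map_one]
        simp only [hf]
        exact mixU_colSum p q π τ x
    | mismatch c d x y h =>
      rw [map_mul, hf, hf, map_zero]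
      exact hmis c d x y h
  let F := RingQuot.liftAlgHom ℂ
    (s := IsoRel (PtSet S) (PtSet S) (ptRel S) (ptRel S)) ⟨f, hrel⟩
  have hF : ∀ c x, F (matGen S S c x) = mixU p q π τ c x := by
    intro c x
    rw [← hf]
    exact RingQuot.liftAlgHom_mkAlgHom_apply ℂ f hrel _
  refine ⟨matGen S S a (π a), matGen S S b (τ b), fun h => hpq ?_⟩
  have h' := congrArg F h
  rw [map_mul, map_mul, hF, hF, mixU_left _ _ _ _ _ _ ((hdisj a).1 ha),
    mixU_right _ _ _ _ _ _ ((hdisj b).2 hb)] at h'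
  simpa [ha, hb] using h'

end MatroidGame
end

section
/- Let M be a matroid with a collection S_M ⊆ 2^{E(M)} covering M. Suppose there are distinct elements a, b, c, d ∈ E(M) and members A, B ∈ S_M with a, b ∈ A and c, d ∈ B, such that no member of S_M other than A contains a or b, and no member of S_M other than B contains c or d. Then the permutations of S•(M) induced by the transpositions a ↔ b and c ↔ d of E(M) (sending (C,p) to (σ(C), σ(p)) for the respective transposition σ) are disjoint non-identity permutations of S•(M) preserving rel_M, and consequently the algebra 𝔄(M,S) is noncommutative. -/
open scoped BigOperators TensorProduct

namespace MatroidGame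

/-- A family of idempotents (indexed by a type label `T`), and an involution `s`. -/
theorem exists_noncomm {I : Type*} [Fintype I] (r : I → I → ℕ) (T : I → Bool)
    (s : I → I) (hs : ∀ v, s (s v) = v) (hT : ∀ v, T (s v) = T v)
    (h1 : ∀ v w, r (s v) (s w) = r v w)
    (h2 : ∀ v w, T v ≠ T w → r (s v) w = r v w ∧ r v (s w) = r v w)
    (v w : I) (hv : T v = true) (hw : T w = false) (hsv : s v ≠ v) (hsw : s w ≠ w) :
    ∃ x y : IsoAlgebra I I r r, x * y ≠ y * x := by
  classical
  let e : Bool → Matrix (Fin 2) (Fin 2) ℂ := fun t =>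
    if t then !![1, 0; 0, 0] else !![1, 1; 0, 0]
  have he : ∀ t, e t * e t = e t := by
    intro t
    cases t <;> ext i j <;> fin_cases i <;> fin_cases j <;> simp [e]
  have he1 : ∀ t, e t * (1 - e t) = 0 := by
    intro t
    rw [mul_sub, he, mul_one, sub_self]
  have he2 : ∀ t, (1 - e t) * e t = 0 := by
    intro t
    rw [sub_mul, he, one_mul, sub_self]
  have he3 : ∀ t, (1 - e t) * (1 - e t) = 1 - e t := by
    intro t
    rw [mul_sub, he2, mul_one, sub_zero]
  have hne : e true * e false ≠ e false * e true := by
    intro h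
    have := congrFun (congrFun h 0) 1
    simp [e] at this
  let u : I × I → Matrix (Fin 2) (Fin 2) ℂ := fun p =>
    (if p.2 = p.1 then e (T p.1) else 0) + (if p.2 = s p.1 then 1 - e (T p.1) else 0)
  have mism : ∀ a b x y, r a b ≠ r x y → u (a, x) * u (b, y) = 0 := by
    intro a b x y h
    have t1 : (if x = a then e (T a) else 0) * (if y = b then e (T b) else 0) = 0 := by
      split_ifs with p q
      · subst p; subst q
        by_cases hab : T x = T y
        · exact absurd rfl h
        · exact absurd rfl h
      all_goals simp
    have t2 : (if x = a then e (T a) else 0) * (if y = s b then 1 - e (T b) else 0) = 0 := by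
      split_ifs with p q
      · subst p; subst q
        by_cases hab : T x = T b
        · rw [hab, he1]
        · exact absurd (h2 x b hab).2.symm h
      all_goals simp
    have t3 : (if x = s a then 1 - e (T a) else 0) * (if y = b then e (T b) else 0) = 0 := by
      split_ifs with p q
      · subst p; subst q
        by_cases hab : T a = T y
        · rw [hab, he2]
        · exact absurd (h2 a y hab).1.symm h
      all_goals simp
    have t4 : (if x = s a then 1 - e (T a) else 0) * (if y = s b then 1 - e (T b) else 0) = 0 := by
      split_ifs with p q
      · subst p; subst q
        by_cases hab : T a = T b
        · exact absurd (h1 a b).symm h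
        · exact absurd (h1 a b).symm h
      all_goals simp
    simp only [u, add_mul, mul_add]
    rw [t1, t2, t3, t4]; simp
  have hinj : ∀ x a, x = s a ↔ s x = a := by
    intro x a
    constructor
    · rintro rfl; exact hs a
    · rintro rfl; exact (hs x).symm
  have hrel : ∀ p q, IsoRel I I r r p q → FreeAlgebra.lift ℂ u p = FreeAlgebra.lift ℂ u q := by
    intro p q h
    cases h with
    | mismatch a b x y h =>
      simpa using mism a b x y h
    | magic h =>
      cases h with
      | idem a x =>
        simp only [map_mul, FreeAlgebra.lift_ι_apply, u]
        split_ifs <;> simp [he, he3]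
      | row a h =>
        rename_i x y
        simp only [map_mul, FreeAlgebra.lift_ι_apply, map_zero, u]
        split_ifs <;> simp_all only [mul_zero, zero_mul, add_zero, zero_add, not_true, ne_eq]
      | col x h =>
        rename_i a b
        simp only [map_mul, FreeAlgebra.lift_ι_apply, map_zero, u]
        by_cases ha : x = a
        · subst ha
          by_cases hb : x = s b
          · have : T x = T b := by rw [hb, hT]
            have hxs : x ≠ s x := by
              intro h'
              apply h
              rw [hb, hs] at h'
              rw [hb] at h ⊢
              exact h'
            simp [h, ← hb, hxs, this, he1]
          · simp [h, hb]
        · by_cases hb : x = b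
          · subst hb
            by_cases ha' : x = s a
            · have : T x = T a := by rw [ha', hT]
              have hxs : x ≠ s x := by
                intro h'
                apply h
                rw [(hinj x a).1 ha'] at h'
                exact h'.symm
              simp [ha, ← ha', hxs, this, he2]
            · simp [ha, ha']
          · by_cases ha' : x = s a
            · have hb' : x ≠ s b := by
                intro h'
                exact h (((hinj x a).1 ha').symm.trans ((hinj x b).1 h'))
              simp [ha, hb, hb']
            · simp [ha, ha']
      | rowSum a =>
        simp [u, Finset.sum_add_distrib]
      | colSum x =>
        have : ∀ a, (if x = s a then 1 - e (T a) else 0)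
            = if a = s x then 1 - e (T a) else 0 := by
          intro a
          have : x = s a ↔ a = s x := by rw [hinj, eq_comm]
          simp only [this]
        simp [u, Finset.sum_add_distrib, this, hT]
  let φ : IsoAlgebra I I r r →ₐ[ℂ] Matrix (Fin 2) (Fin 2) ℂ :=
    RingQuot.liftAlgHom ℂ ⟨FreeAlgebra.lift ℂ u, fun {p q} h => hrel p q h⟩
  have hφ : ∀ a x, φ (isoGen I I r r a x) = u (a, x) := by
    intro a x
    simp [φ, isoGen]
  refine ⟨isoGen I I r r v v, isoGen I I r r w w, fun h => hne ?_⟩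
  have := congrArg φ h
  simpa [hφ, u, hv, hw, hsv.symm, hsw.symm] using this

theorem image_swap_eq {α : Type*} [DecidableEq α] (a b : α) (C : Finset α)
    (h : a ∈ C ↔ b ∈ C) : C.image (Equiv.swap a b) = C := by
  have key : ∀ x ∈ C, Equiv.swap a b x ∈ C := by
    intro x hx
    rw [Equiv.swap_apply_def]
    split_ifs with h1 h2
    · subst h1; exact h.1 hx
    · subst h2; exact h.2 hx
    · exact hx
  ext x
  rw [Finset.mem_image]
  constructor
  · rintro ⟨y, hy, rfl⟩; exact key y hy
  · intro hx; exact ⟨_, key x hx, Equiv.swap_apply_self a b x⟩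

/-- The permutation of pointed sets induced by a transposition. -/
def swapPt {α : Type*} [DecidableEq α] (S : Finset (Finset α)) (a b : α)
    (h : ∀ C ∈ S, (a ∈ C ↔ b ∈ C)) : Equiv.Perm (PtSet S) :=
  Function.Involutive.toPerm
    (fun v => ⟨(v.val.1, Equiv.swap a b v.val.2), v.2.1, by
      have := Finset.mem_image_of_mem (Equiv.swap a b) v.2.2
      rwa [image_swap_eq a b _ (h _ v.2.1)] at this⟩)
    (fun v => Subtype.ext (Prod.ext rfl (Equiv.swap_apply_self a b _)))

theorem swapPt_val {α : Type*} [DecidableEq α] (S : Finset (Finset α)) (a b : α)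
    (h : ∀ C ∈ S, (a ∈ C ↔ b ∈ C)) (v : PtSet S) :
    (swapPt S a b h v).val = (v.val.1, Equiv.swap a b v.val.2) := rfl

theorem swapPt_invol {α : Type*} [DecidableEq α] (S : Finset (Finset α)) (a b : α)
    (h : ∀ C ∈ S, (a ∈ C ↔ b ∈ C)) (v : PtSet S) :
    swapPt S a b h (swapPt S a b h v) = v :=
  Subtype.ext (Prod.ext rfl (Equiv.swap_apply_self a b _))

theorem swapPt_rel {α : Type*} [DecidableEq α] (S : Finset (Finset α)) (a b : α)
    (h : ∀ C ∈ S, (a ∈ C ↔ b ∈ C)) (v w : PtSet S) :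
    relNum (swapPt S a b h v).val (swapPt S a b h w).val = relNum v.val w.val := by
  simp [swapPt_val, relNum]

theorem swapPt_fix {α : Type*} [DecidableEq α] (S : Finset (Finset α)) (a b : α)
    (h : ∀ C ∈ S, (a ∈ C ↔ b ∈ C)) (v : PtSet S) (ha : v.val.2 ≠ a) (hb : v.val.2 ≠ b) :
    swapPt S a b h v = v :=
  Subtype.ext (Prod.ext rfl (Equiv.swap_apply_of_ne_of_ne ha hb))

theorem swapPt_ne {α : Type*} [DecidableEq α] (S : Finset (Finset α)) (a b : α)
    (h : ∀ C ∈ S, (a ∈ C ↔ b ∈ C)) (hab : a ≠ b) (v : PtSet S) (ha : v.val.2 = a) :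
    swapPt S a b h v ≠ v := by
  intro h'
  have := congrArg (fun z => z.val.2) h'
  simp only [swapPt_val, ha, Equiv.swap_apply_left] at this
  exact hab this.symm

open PreMatroid


theorem stmt19 {α : Type*} [Fintype α] [DecidableEq α]
    (M : PreMatroid α) (hM : M.IsMatroid)
    (S : Finset (Finset α)) (hS : ∀ A ∈ S, A ⊆ M.E) (hcov : Covers S M.E)
    (a b c d : α) (hab : a ≠ b) (hac : a ≠ c) (had : a ≠ d) (hbc : b ≠ c)
    (hbd : b ≠ d) (hcd : c ≠ d)
    (A B : Finset α) (hA : A ∈ S) (hB : B ∈ S)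
    (haA : a ∈ A) (hbA : b ∈ A) (hcB : c ∈ B) (hdB : d ∈ B)
    (honlyA : ∀ C ∈ S, C ≠ A → a ∉ C ∧ b ∉ C)
    (honlyB : ∀ C ∈ S, C ≠ B → c ∉ C ∧ d ∉ C) :
    (∃ π τ : Equiv.Perm (PtSet S),
      (∀ v : PtSet S,
        (π v).val = (v.val.1.image (Equiv.swap a b), Equiv.swap a b v.val.2)) ∧
      (∀ v : PtSet S,
        (τ v).val = (v.val.1.image (Equiv.swap c d), Equiv.swap c d v.val.2)) ∧
      π ≠ 1 ∧ τ ≠ 1 ∧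
      (∀ v w : PtSet S, relNum (π v).val (π w).val = relNum v.val w.val) ∧
      (∀ v w : PtSet S, relNum (τ v).val (τ w).val = relNum v.val w.val) ∧
      (∀ v : PtSet S, (π v ≠ v → τ v = v) ∧ (τ v ≠ v → π v = v))) ∧
    ∃ x y : MatIsoAlgebra S S, x * y ≠ y * x := by
  have hAB : ∀ C ∈ S, (a ∈ C ↔ b ∈ C) := by
    intro C hC
    by_cases h : C = A
    · subst h; exact ⟨fun _ => hbA, fun _ => haA⟩
    · have := honlyA C hC h
      exact ⟨fun k => absurd k this.1, fun k => absurd k this.2⟩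
  have hCD : ∀ C ∈ S, (c ∈ C ↔ d ∈ C) := by
    intro C hC
    by_cases h : C = B
    · subst h; exact ⟨fun _ => hdB, fun _ => hcB⟩
    · have := honlyB C hC h
      exact ⟨fun k => absurd k this.1, fun k => absurd k this.2⟩
  obtain ⟨π, hπ⟩ : ∃ π, π = swapPt S a b hAB := ⟨_, rfl⟩
  obtain ⟨τ, hτ⟩ : ∃ τ, τ = swapPt S c d hCD := ⟨_, rfl⟩
  let v : PtSet S := ⟨(A, a), hA, haA⟩
  let w : PtSet S := ⟨(B, c), hB, hcB⟩
  have hv : π v ≠ v := hπ ▸ swapPt_ne S a b hAB hab v rfl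
  have hw : τ w ≠ w := hτ ▸ swapPt_ne S c d hCD hcd w rfl
  have hππ : ∀ v, π (π v) = v := hπ ▸ swapPt_invol S a b hAB
  have hττ : ∀ v, τ (τ v) = v := hτ ▸ swapPt_invol S c d hCD
  have rπ : ∀ v w : PtSet S, relNum (π v).val (π w).val = relNum v.val w.val :=
    hπ ▸ swapPt_rel S a b hAB
  have rτ : ∀ v w : PtSet S, relNum (τ v).val (τ w).val = relNum v.val w.val :=
    hτ ▸ swapPt_rel S c d hCD
  have disj : ∀ v, π v ≠ v → τ v = v := by
    intro v h
    rw [hτ]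
    apply swapPt_fix <;> intro k <;> apply h <;> rw [hπ] <;> apply swapPt_fix <;> rw [k]
    · exact hac.symm
    · exact hbc.symm
    · exact had.symm
    · exact hbd.symm
  have disj' : ∀ v, τ v ≠ v → π v = v := fun v h => by
    by_contra k
    exact h (disj v k)
  constructor
  · refine ⟨π, τ, ?_, ?_, ?_, ?_, rπ, rτ, fun v => ⟨disj v, disj' v⟩⟩
    · intro v
      rw [image_swap_eq a b _ (hAB _ v.2.1), hπ, swapPt_val]
    · intro v
      rw [image_swap_eq c d _ (hCD _ v.2.1), hτ, swapPt_val]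
    · intro h; apply hv; rw [h]; rfl
    · intro h; apply hw; rw [h]; rfl
  · have cπ : ∀ v, π v ≠ v → π (π v) ≠ π v := fun v h k => h (π.injective k)
    have cτ : ∀ v, τ v ≠ v → τ (τ v) ≠ τ v := fun v h k => h (τ.injective k)
    have hcomm : ∀ v, π (τ v) = τ (π v) := by
      intro v
      by_cases h : π v = v
      · by_cases k : τ v = v
        · rw [k, h, k]
        · rw [h, disj' _ (cτ v k)]
      · rw [disj v h, disj _ (cπ v h)]
    have fx : ∀ v, π v = v → π (τ v) = τ v := fun v h => by rw [hcomm, h]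
    have fx' : ∀ v, τ v = v → τ (π v) = π v := fun v h => by rw [← hcomm, h]
    have mixed : ∀ x y, π x ≠ x → π y = y →
        relNum (π (τ x)).val y.val = relNum x.val y.val ∧
        relNum x.val (π (τ y)).val = relNum x.val y.val ∧
        relNum y.val (π (τ x)).val = relNum y.val x.val ∧
        relNum (π (τ y)).val x.val = relNum y.val x.val := by
      intro x y hx hy
      have tx := disj x hx
      have e1 := rπ x y
      have e2 := rτ x y
      have e3 := rπ y x
      have e4 := rτ y x
      rw [hy] at e1 e3
      rw [tx] at e2 e4
      rw [tx, fx y hy]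
      exact ⟨e1, e2, e3, e4⟩
    refine exists_noncomm (ptRel S) (fun v => decide (π v ≠ v)) (fun v => π (τ v)) ?_ ?_ ?_ ?_
      v w ?_ ?_ ?_ ?_
    · intro v
      change π (τ (π (τ v))) = v
      rw [hcomm v, hττ, hππ]
    · intro v
      have : π (π (τ v)) = π (τ v) ↔ π v = v := by
        rw [π.injective.eq_iff, hcomm, τ.injective.eq_iff]
      simp only [ne_eq, this]
    · intro v w
      change relNum (π (τ v)).val (π (τ w)).val = relNum v.val w.val
      rw [rπ, rτ]
    · intro x y h
      change relNum (π (τ x)).val y.val = relNum x.val y.val ∧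
        relNum x.val (π (τ y)).val = relNum x.val y.val
      by_cases hx : π x = x
      · have hy : π y ≠ y := fun hy => h (by simp [hx, hy])
        have := mixed y x hy hx
        exact ⟨this.2.2.2, this.2.2.1⟩
      · have hy : π y = y := by
          by_contra hy
          exact h (by simp [hx, hy])
        have := mixed x y hx hy
        exact ⟨this.1, this.2.1⟩
    · simpa using hv
    · simpa using disj' w hw
    · change π (τ v) ≠ v
      rw [disj v hv]; exact hv
    · change π (τ w) ≠ w
      rw [fx w (disj' w hw)]; exact hw

end MatroidGame
end
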